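/- Let T > 0, let σ : ℝ → ℝ be Lipschitz continuous with σ(x) > 0 for all x, let b and b̃ belong to the class M, and let f : ℝ → ℝ be of class C² with f'(x) ≠ 0 for all x ∈ ℝ. Let u be a classical solution of the parabolic equation associated with (b, σ, f) and let ũ be a classical solution of the parabolic equation associated with (b̃, σ, f). If there exist ε ∈ (0, T) and a point x₀ ∈ ℝ such that u(t,x₀) = ũ(t,x₀) and ∂_x u(t,x₀) = ∂_x ũ(t,x₀) for all t ∈ (0, ε), then b(x) = b̃(x) for all x ∈ ℝ. -/

import Mathlib

open Set Filter

/-- A function `ψ : ℝ → ℝ` is piecewise analytic if there exist `δ > 0`, a strictly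
increasing sequence `(κ j)_{j ∈ ℤ}` tending to `-∞` at `-∞` and `+∞` at `+∞` with
`κ (j+1) - κ j > δ`, and functions `φ j` analytic on `[κ j, κ (j+1)]`, such that
`ψ = φ j` on `[κ j, κ (j+1))`. -/
def PiecewiseAnalytic (ψ : ℝ → ℝ) : Prop :=
  ∃ (δ : ℝ) (κ : ℤ → ℝ) (φ : ℤ → ℝ → ℝ),
    0 < δ ∧ StrictMono κ ∧
    Tendsto κ atBot atBot ∧ Tendsto κ atTop atTop ∧
    (∀ j : ℤ, δ < κ (j + 1) - κ j) ∧
    (∀ j : ℤ, AnalyticOn ℝ (φ j) (Icc (κ j) (κ (j + 1)))) ∧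
    (∀ j : ℤ, ∀ x ∈ Ico (κ j) (κ (j + 1)), ψ x = φ j x)

/-- The class `M` of Lipschitz-continuous, piecewise analytic functions on `ℝ`. -/
def ClassM (ψ : ℝ → ℝ) : Prop :=
  (∃ K, LipschitzWith K ψ) ∧ PiecewiseAnalytic ψ

/-- `u : [0,T) × ℝ → ℝ` is a classical solution of
`∂ₜ u = (1/2) σ(x)² ∂ₓₓ u + b(x) ∂ₓ u`, `u(0, ·) = f`:
`u`, `∂ₜ u`, `∂ₓ u`, `∂ₓₓ u` exist and are continuous on `[0,T) × ℝ`, the PDE holds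
there, and the initial condition holds. -/
def IsClassicalSolution (T : ℝ) (b σ f : ℝ → ℝ) (u : ℝ → ℝ → ℝ) : Prop :=
  ContinuousOn (fun p : ℝ × ℝ => u p.1 p.2) (Ico 0 T ×ˢ univ) ∧
  (∀ t ∈ Ico 0 T, ∀ x : ℝ, DifferentiableAt ℝ (fun s => u s x) t) ∧
  (∀ t ∈ Ico 0 T, ∀ x : ℝ, DifferentiableAt ℝ (fun y => u t y) x) ∧
  (∀ t ∈ Ico 0 T, ∀ x : ℝ, DifferentiableAt ℝ (deriv (fun y => u t y)) x) ∧
  ContinuousOn (fun p : ℝ × ℝ => deriv (fun s => u s p.2) p.1) (Ico 0 T ×ˢ univ) ∧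
  ContinuousOn (fun p : ℝ × ℝ => deriv (fun y => u p.1 y) p.2) (Ico 0 T ×ˢ univ) ∧
  ContinuousOn (fun p : ℝ × ℝ => deriv (deriv (fun y => u p.1 y)) p.2) (Ico 0 T ×ˢ univ) ∧
  (∀ t ∈ Ico 0 T, ∀ x : ℝ,
    deriv (fun s => u s x) t =
      (1 / 2) * (σ x) ^ 2 * deriv (deriv (fun y => u t y)) x
        + b x * deriv (fun y => u t y) x) ∧
  (∀ x : ℝ, u 0 x = f x)

open Set Filter

lemma deriv_nonneg_of_right_min {g : ℝ → ℝ} {g' x c : ℝ} (hc : x < c) (h : HasDerivAt g g' x)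
    (hm : ∀ y ∈ Icc x c, g x ≤ g y) : 0 ≤ g' := by
  have h1 := (hasDerivWithinAt_iff_tendsto_slope' (s := Ioi x) (by simp)).1 h.hasDerivWithinAt
  refine ge_of_tendsto h1 ?_
  filter_upwards [Ioc_mem_nhdsGT hc] with y hy
  rw [slope_def_field]
  exact div_nonneg (by linarith [hm y ⟨hy.1.le, hy.2⟩]) (by linarith [hy.1])

lemma deriv_nonpos_of_left_min {g : ℝ → ℝ} {g' x c : ℝ} (hc : c < x) (h : HasDerivAt g g' x)
    (hm : ∀ y ∈ Icc c x, g x ≤ g y) : g' ≤ 0 := by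
  have h1 := (hasDerivWithinAt_iff_tendsto_slope' (s := Iio x) (by simp)).1 h.hasDerivWithinAt
  refine le_of_tendsto h1 ?_
  filter_upwards [Ico_mem_nhdsLT hc] with y hy
  rw [slope_def_field]
  exact div_nonpos_of_nonneg_of_nonpos (by linarith [hm y ⟨hy.1, hy.2.le⟩]) (by linarith [hy.2])

lemma second_deriv_nonneg {g g₁ : ℝ → ℝ} {g₂ x : ℝ}
    (h : ∀ᶠ y in nhds x, HasDerivAt g (g₁ y) y) (h2 : HasDerivAt g₁ g₂ x)
    (hm : IsLocalMin g x) : 0 ≤ g₂ := by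
  by_contra hneg
  push Not at hneg
  have e1 : deriv g =ᶠ[nhds x] g₁ := h.mono fun y hy => hy.deriv
  have e2 : deriv (deriv g) x = g₂ := by rw [e1.deriv_eq]; exact h2.deriv
  have hM : IsLocalMax g x := isLocalMax_of_deriv_deriv_neg (by rw [e2]; exact hneg)
    hm.deriv_eq_zero h.self_of_nhds.continuousAt
  have hc : g =ᶠ[nhds x] fun _ => g x := by
    filter_upwards [hm, hM] with y h1 h2 using le_antisymm h2 h1
  have e3 : deriv (deriv g) x = 0 := by
    rw [hc.deriv.deriv_eq]; simp
  linarith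

/-- Quantitative Hopf lemma through an explicit travelling exponential barrier. -/
lemma hopf_core {x0 x2 τ am B c : ℝ} (hx : x0 < x2) (hτ : 0 < τ) (ham : 0 < am) (hc : 0 < c)
    (a β : ℝ → ℝ) (ha : ∀ x ∈ Icc x0 x2, am ≤ a x) (hβ : ∀ x ∈ Icc x0 x2, -B ≤ β x)
    (w wt wx wxx : ℝ → ℝ → ℝ)
    (hcont : ContinuousOn (fun p : ℝ × ℝ => w p.1 p.2) (Icc 0 τ ×ˢ Icc x0 x2))
    (hwt : ∀ t ∈ Icc 0 τ, ∀ x ∈ Icc x0 x2, HasDerivAt (fun s => w s x) (wt t x) t)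
    (hwx : ∀ t ∈ Icc 0 τ, ∀ x ∈ Icc x0 x2, HasDerivAt (w t) (wx t x) x)
    (hwxx : ∀ t ∈ Icc 0 τ, ∀ x ∈ Icc x0 x2, HasDerivAt (wx t) (wxx t x) x)
    (hpde : ∀ t ∈ Icc 0 τ, ∀ x ∈ Icc x0 x2, a x * wxx t x + β x * wx t x ≤ wt t x)
    (h0 : ∀ x ∈ Icc x0 x2, w 0 x = 0) (hl : ∀ t ∈ Icc 0 τ, w t x0 = 0)
    (hr : ∀ t ∈ Icc 0 τ, c * t ≤ w t x2) : 0 < wx τ x0 := by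
  obtain ⟨k, hk⟩ : ∃ k, k = (x2 - x0) / τ := ⟨_, rfl⟩
  have hk0 : 0 < k := by rw [hk]; exact div_pos (by linarith) hτ
  have hkτ : k * τ = x2 - x0 := by rw [hk]; field_simp
  obtain ⟨α, hα⟩ : ∃ α, α = (k + |B| + 1) / am := ⟨_, rfl⟩
  have hα0 : 0 < α := by rw [hα]; positivity
  have hαm : am * α = k + |B| + 1 := by rw [hα]; field_simp
  have hstrict : ∀ x ∈ Icc x0 x2, k < a x * α + β x := by
    intro x hx
    have := mul_le_mul_of_nonneg_right (ha x hx) hα0.le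
    have := hβ x hx
    have := le_abs_self B
    linarith
  -- the bound exp (α k t) - 1 ≤ C t
  obtain ⟨C, hC⟩ : ∃ C, C = α * k * Real.exp (α * k * τ) := ⟨_, rfl⟩
  have hC0 : 0 < C := by rw [hC]; positivity
  have hexp : ∀ t ∈ Icc 0 τ, Real.exp (α * k * t) - 1 ≤ C * t := by
    intro t ht
    have h1 : 1 - α * k * t ≤ Real.exp (-(α * k * t)) := by
      have := Real.add_one_le_exp (-(α * k * t)); linarith
    have h2 : Real.exp (α * k * t) * Real.exp (-(α * k * t)) = 1 := by
      rw [← Real.exp_add]; simp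
    have h3 : Real.exp (α * k * t) ≤ Real.exp (α * k * τ) := by
      apply Real.exp_le_exp.2
      exact mul_le_mul_of_nonneg_left ht.2 (by positivity)
    have h4 : Real.exp (α * k * t) * (1 - α * k * t) ≤ 1 := by
      exact (mul_le_mul_of_nonneg_left h1 (Real.exp_pos _).le).trans h2.le
    have h5 : (α * k * t) * Real.exp (α * k * t) ≤ (α * k * t) * Real.exp (α * k * τ) :=
      mul_le_mul_of_nonneg_left h3 (by have := ht.1; positivity)
    rw [hC]; nlinarith
  obtain ⟨η, hη⟩ : ∃ η, η = c / C := ⟨_, rfl⟩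
  have hη0 : 0 < η := by rw [hη]; positivity
  have hηC : η * C = c := by rw [hη]; field_simp
  let E : ℝ → ℝ → ℝ := fun t x => Real.exp (α * (x - x2 + k * t))
  have hEpos : ∀ t x, 0 < E t x := fun t x => Real.exp_pos _
  have hEt : ∀ t x, HasDerivAt (fun s => E s x) (α * k * E t x) t := by
    intro t x
    have : HasDerivAt (fun s => α * (x - x2 + k * s)) (α * (k * 1)) t :=
      (((hasDerivAt_id t).const_mul k).const_add (x - x2)).const_mul α
    convert this.exp using 1
    simp only [E]; ring
  have hEx : ∀ t x, HasDerivAt (E t) (α * E t x) x := by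
    intro t x
    have : HasDerivAt (fun y => α * (y - x2 + k * t)) (α * 1) x :=
      (((hasDerivAt_id x).sub_const x2).add_const (k * t)).const_mul α
    convert this.exp using 1
    simp only [E]; ring
  let z : ℝ → ℝ → ℝ := fun t x => w t x - η * (E t x - 1)
  have hzcont : ContinuousOn (fun p : ℝ × ℝ => z p.1 p.2) (Icc 0 τ ×ˢ Icc x0 x2) := by
    apply hcont.sub
    apply Continuous.continuousOn
    simp only [E]
    fun_prop
  have hzx : ∀ t ∈ Icc 0 τ, ∀ x ∈ Icc x0 x2, HasDerivAt (z t) (wx t x - η * (α * E t x)) x :=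
    fun t ht x hx => (hwx t ht x hx).sub (((hEx t x).sub_const 1).const_mul η)
  have hzxx : ∀ t ∈ Icc 0 τ, ∀ x ∈ Icc x0 x2,
      HasDerivAt (fun x => wx t x - η * (α * E t x)) (wxx t x - η * (α * (α * E t x))) x :=
    fun t ht x hx => (hwxx t ht x hx).sub (((hEx t x).const_mul α).const_mul η)
  have hzt : ∀ t ∈ Icc 0 τ, ∀ x ∈ Icc x0 x2,
      HasDerivAt (fun s => z s x) (wt t x - η * (α * k * E t x)) t :=
    fun t ht x hx => (hwt t ht x hx).sub (((hEt t x).sub_const 1).const_mul η)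
  have hz : ∀ t ∈ Icc 0 τ, ∀ x ∈ Icc x0 x2, 0 ≤ z t x := by
    obtain ⟨⟨s, y⟩, ⟨hs, hy⟩, hmin⟩ := (isCompact_Icc.prod isCompact_Icc).exists_isMinOn
      (s := Icc (0:ℝ) τ ×ˢ Icc x0 x2) ⟨(0, x0), by simp [hτ.le, hx.le]⟩ hzcont
    have hmin' : ∀ t ∈ Icc 0 τ, ∀ x ∈ Icc x0 x2, z s y ≤ z t x :=
      fun t ht x hx => hmin (show (t, x) ∈ _ from ⟨ht, hx⟩)
    simp only at hs hy
    suffices 0 ≤ z s y from fun t ht x hx => this.trans (hmin' t ht x hx)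
    by_contra hneg
    push Not at hneg
    have hs0 : 0 < s := by
      rcases hs.1.lt_or_eq with h | h
      · exact h
      · exfalso
        have h1 : E s y ≤ 1 := by
          apply Real.exp_le_one_iff.2
          rw [← h]
          have : y ≤ x2 := hy.2
          nlinarith
        have h2 : w s y = 0 := by rw [← h]; exact h0 y hy
        simp only [z] at hneg
        nlinarith
    have hy0 : x0 < y := by
      rcases hy.1.lt_or_eq with h | h
      · exact h
      · exfalso
        have h1 : E s y ≤ 1 := by
          apply Real.exp_le_one_iff.2
          rw [← h]
          have : k * s ≤ k * τ := mul_le_mul_of_nonneg_left hs.2 hk0.le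
          apply mul_nonpos_of_nonneg_of_nonpos hα0.le
          linarith
        have h2 : w s y = 0 := by rw [← h]; exact hl s hs
        simp only [z] at hneg
        nlinarith
    have hy2 : y < x2 := by
      rcases hy.2.lt_or_eq with h | h
      · exact h
      · exfalso
        have h1 : E s y - 1 ≤ C * s := by
          have := hexp s hs
          have e : E s y = Real.exp (α * k * s) := by
            simp only [E, h]; congr 1; ring
          rw [e]; exact this
        have h2 : c * s ≤ w s y := by rw [h]; exact hr s hs
        have h3 : η * (E s y - 1) ≤ η * (C * s) := mul_le_mul_of_nonneg_left h1 hη0.le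
        simp only [z] at hneg
        rw [← hηC] at h2
        linarith
    have hnb : ∀ᶠ x in nhds y, x ∈ Icc x0 x2 := Icc_mem_nhds hy0 hy2
    have hlm : IsLocalMin (z s) y := hnb.mono fun x hx => hmin' s hs x hx
    have d1 : wx s y - η * (α * E s y) = 0 := hlm.hasDerivAt_eq_zero (hzx s hs y hy)
    have d2 : 0 ≤ wxx s y - η * (α * (α * E s y)) :=
      second_deriv_nonneg (hnb.mono fun x hx => hzx s hs x hx) (hzxx s hs y hy) hlm
    have d3 : wt s y - η * (α * k * E s y) ≤ 0 :=
      deriv_nonpos_of_left_min hs0 (hzt s hs y hy)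
        fun t ht => hmin' t ⟨ht.1, ht.2.trans hs.2⟩ y hy
    have p := hpde s hs y hy
    have q : η * α * E s y * k < η * α * E s y * (a y * α + β y) :=
      mul_lt_mul_of_pos_left (hstrict y hy) (mul_pos (mul_pos hη0 hα0) (hEpos s y))
    have r : 0 ≤ a y * (wxx s y - η * (α * (α * E s y))) :=
      mul_nonneg (ham.le.trans (ha y hy)) d2
    have d1' : wx s y = η * (α * E s y) := by linarith
    rw [d1'] at p
    nlinarith
  have hτm : τ ∈ Icc 0 τ := ⟨hτ.le, le_rfl⟩
  have hxm : x0 ∈ Icc x0 x2 := ⟨le_rfl, hx.le⟩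
  have hE1 : E τ x0 = 1 := by
    simp only [E]; rw [hkτ]; simp
  have hz0 : z τ x0 = 0 := by simp [z, hE1, hl τ hτm]
  have := deriv_nonneg_of_right_min hx (hzx τ hτm x0 hxm)
    fun y hy => by rw [hz0]; exact hz τ hτm y hy
  rw [hE1] at this
  have : 0 < η * α := mul_pos hη0 hα0
  linarith

lemma exists_sign_point {d : ℝ → ℝ} (hd : Continuous d)
    (hD : ∀ x, (∀ᶠ y in nhdsWithin x (Ioi x), d y = 0) ∨ (∀ᶠ y in nhdsWithin x (Ioi x), d y ≠ 0))
    {x0 y0 : ℝ} (hy : x0 < y0) (hne : d y0 ≠ 0) :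
    ∃ x2, x0 < x2 ∧ d x2 ≠ 0 ∧ ∀ x ∈ Icc x0 x2, 0 ≤ d x * d x2 := by
  obtain ⟨S, hS⟩ : ∃ S : Set ℝ, S = {x | x0 < x ∧ d x ≠ 0} := ⟨_, rfl⟩
  have hSne : S.Nonempty := ⟨y0, by rw [hS]; exact ⟨hy, hne⟩⟩
  have hSb : BddBelow S := ⟨x0, by rw [hS]; exact fun x hx => hx.1.le⟩
  obtain ⟨x1, hx1⟩ : ∃ x1, x1 = sInf S := ⟨_, rfl⟩
  have h01 : x0 ≤ x1 := by
    rw [hx1]; exact le_csInf hSne (by rw [hS]; exact fun x hx => hx.1.le)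
  have hzero : ∀ x, x0 < x → x < x1 → d x = 0 := by
    intro x h1 h2
    by_contra h
    have : x1 ≤ x := by rw [hx1]; exact csInf_le hSb (by rw [hS]; exact ⟨h1, h⟩)
    linarith
  have hzero' : x0 < x1 → ∀ x ∈ Icc x0 x1, d x = 0 := by
    intro hlt x hx
    have hcl : IsClosed {x | d x = 0} := isClosed_eq hd continuous_const
    have : Ioo x0 x1 ⊆ {x | d x = 0} := fun x hx => hzero x hx.1 hx.2
    have := closure_minimal this hcl
    rw [closure_Ioo hlt.ne] at this
    exact this hx
  have hev : ∀ᶠ y in nhdsWithin x1 (Ioi x1), d y ≠ 0 := by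
    refine (hD x1).resolve_left fun h => ?_
    obtain ⟨c, hc, hc'⟩ := mem_nhdsGT_iff_exists_Ioc_subset.1 h
    have hc1 : x1 < c := hc
    obtain ⟨y, hyS, hyc⟩ := exists_lt_of_csInf_lt hSne (hx1 ▸ hc1)
    have hy1 : x1 ≤ y := by rw [hx1]; exact csInf_le hSb hyS
    rw [hS] at hyS
    rcases hy1.lt_or_eq with h' | h'
    · exact hyS.2 (hc' ⟨h', hyc.le⟩)
    · rcases h01.lt_or_eq with h'' | h''
      · exact hyS.2 (hzero' h'' y ⟨hyS.1.le, h'.ge⟩)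
      · have := hyS.1
        linarith
  obtain ⟨c, hc, hc'⟩ := mem_nhdsGT_iff_exists_Ioc_subset.1 hev
  have hc1 : x1 < c := hc
  have hcne : d c ≠ 0 := hc' ⟨hc, le_rfl⟩
  have hpos : ∀ x ∈ Ioc x1 c, 0 ≤ d x * d c := by
    intro x hx
    by_contra hneg
    push Not at hneg
    have hco : ContinuousOn (fun y => d y * d c) (Icc x c) := by fun_prop
    have := intermediate_value_Icc hx.2 hco
    obtain ⟨y, hy, hy0⟩ := this (⟨hneg.le, mul_self_nonneg _⟩ : (0:ℝ) ∈ Icc _ _)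
    have : d y ≠ 0 := hc' ⟨hx.1.trans_le hy.1, hy.2⟩
    exact (mul_ne_zero this hcne) hy0
  have hpos' : ∀ x ∈ Icc x1 c, 0 ≤ d x * d c := by
    have hcl : IsClosed {x | 0 ≤ d x * d c} := isClosed_le continuous_const (by fun_prop)
    have := closure_minimal (s := Ioc x1 c) (t := {x | 0 ≤ d x * d c}) hpos hcl
    rw [closure_Ioc hc1.ne] at this
    exact this
  refine ⟨c, h01.trans_lt hc, hcne, fun x hx => ?_⟩
  rcases le_or_gt x1 x with h | h
  · exact hpos' x ⟨h, hx.2⟩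
  · rw [hzero' (hx.1.trans_lt h) x ⟨hx.1, h.le⟩]; simp

lemma right_uniqueness
    (T : ℝ) (hT : 0 < T)
    (sigma b bt : ℝ → ℝ)
    (hs : Continuous sigma) (hspos : ∀ x, 0 < sigma x)
    (hb : Continuous b) (hbt : Continuous bt)
    (hD : ∀ x, (∀ᶠ y in nhdsWithin x (Ioi x), b y - bt y = 0) ∨
      (∀ᶠ y in nhdsWithin x (Ioi x), b y - bt y ≠ 0))
    (f : ℝ → ℝ) (hf : Continuous (deriv f)) (hfd : ∀ x, deriv f x ≠ 0)
    (u ut : ℝ → ℝ → ℝ)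
    (hu : IsClassicalSolution T b sigma f u)
    (hut : IsClassicalSolution T bt sigma f ut)
    (ε : ℝ) (hε : ε ∈ Ioo 0 T) (x₀ : ℝ)
    (hobs : ∀ t ∈ Ioo 0 ε, u t x₀ = ut t x₀)
    (hobsd : ∀ t ∈ Ioo 0 ε,
      deriv (fun y => u t y) x₀ = deriv (fun y => ut t y) x₀) :
    ∀ x, x₀ < x → b x = bt x := by
  intro y0 hy0
  by_contra hne
  obtain ⟨x2, hx2, hd2, hsign⟩ := exists_sign_point (d := fun x => b x - bt x)
    (hb.sub hbt) hD hy0 (sub_ne_zero.2 hne)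
  obtain ⟨uc, ut1, ux1, uxx1, -, -, -, upde, ui⟩ := hu
  obtain ⟨vc, vt1, vx1, vxx1, -, vxc, -, vpde, vi⟩ := hut
  have hfs : ∀ x, 0 < deriv f x2 * deriv f x := by
    intro x
    by_contra hneg
    push Not at hneg
    have hco : ContinuousOn (fun y => deriv f x2 * deriv f y) (uIcc x x2) := by fun_prop
    have := intermediate_value_uIcc hco
    obtain ⟨y, -, hy⟩ := this (mem_uIcc.2 (Or.inl ⟨hneg, mul_self_nonneg _⟩) : (0:ℝ) ∈ uIcc _ _)
    exact mul_ne_zero (hfd x2) (hfd y) hy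
  have hu0 : (fun y => u 0 y) = f := funext ui
  have hv0 : (fun y => ut 0 y) = f := funext vi
  -- sign of the derivative of `ut` for small times
  have ev1 : ∀ᶠ t in nhds (0:ℝ), ∀ x ∈ Icc x₀ x2, t ∈ Ico 0 T →
      0 < deriv f x2 * deriv (fun y => ut t y) x := by
    apply isCompact_Icc.eventually_forall_of_forall_eventually
    intro x hx
    have h1 : ContinuousWithinAt
        (fun p : ℝ × ℝ => deriv f x2 * deriv (fun y => ut p.1 y) p.2) (Ico 0 T ×ˢ univ) (0, x) :=
      continuousWithinAt_const.mul (vxc (0, x) ⟨⟨le_rfl, hT⟩, mem_univ _⟩)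
    have h2 := h1.eventually_const_lt (u := 0) (by simp only [hv0]; exact hfs x)
    rw [eventually_nhdsWithin_iff] at h2
    filter_upwards [h2] with p hp hp1
    exact hp ⟨hp1, mem_univ _⟩
  obtain ⟨s, hs_def⟩ : ∃ s, s = (b x2 - bt x2) * deriv f x2 := ⟨_, rfl⟩
  have hs0 : s ≠ 0 := by rw [hs_def]; exact mul_ne_zero hd2 (hfd x2)
  have hss : 0 < s * s := mul_self_pos.2 hs0
  let w : ℝ → ℝ → ℝ := fun t x => s * (u t x - ut t x)
  let wt : ℝ → ℝ → ℝ := fun t x => s * (deriv (fun r => u r x) t - deriv (fun r => ut r x) t)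
  let wx : ℝ → ℝ → ℝ := fun t x => s * (deriv (fun y => u t y) x - deriv (fun y => ut t y) x)
  let wxx : ℝ → ℝ → ℝ := fun t x =>
    s * (deriv (deriv (fun y => u t y)) x - deriv (deriv (fun y => ut t y)) x)
  have hwt : ∀ t ∈ Ico 0 T, ∀ x, HasDerivAt (fun r => w r x) (wt t x) t := fun t ht x =>
    ((ut1 t ht x).hasDerivAt.sub (vt1 t ht x).hasDerivAt).const_mul s
  have hwx : ∀ t ∈ Ico 0 T, ∀ x, HasDerivAt (w t) (wx t x) x := fun t ht x =>
    ((ux1 t ht x).hasDerivAt.sub (vx1 t ht x).hasDerivAt).const_mul s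
  have hwxx : ∀ t ∈ Ico 0 T, ∀ x, HasDerivAt (wx t) (wxx t x) x := fun t ht x =>
    ((uxx1 t ht x).hasDerivAt.sub (vxx1 t ht x).hasDerivAt).const_mul s
  have hw0 : ∀ x, w 0 x = 0 := fun x => by simp [w, ui, vi]
  have hT0 : (0:ℝ) ∈ Ico 0 T := ⟨le_rfl, hT⟩
  have hwt0 : wt 0 x2 = s * s := by
    simp only [wt, upde 0 hT0, vpde 0 hT0, hu0, hv0]
    nth_rewrite 3 [hs_def]
    ring
  have ev2 : ∀ᶠ t in nhdsWithin (0:ℝ) (Ioi 0), s * s / 2 * t ≤ w t x2 := by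
    have h1 := (hasDerivWithinAt_iff_tendsto_slope' (s := Ioi (0:ℝ)) (by simp)).1
      (hwt 0 hT0 x2).hasDerivWithinAt
    rw [hwt0] at h1
    filter_upwards [h1.eventually_const_lt (half_lt_self hss), self_mem_nhdsWithin] with t ht ht0
    rw [slope_def_field, hw0, sub_zero, sub_zero] at ht
    exact ((lt_div_iff₀ ht0).1 ht).le
  obtain ⟨τ, hτ, hτ'⟩ := mem_nhdsGT_iff_exists_Ioc_subset.1
    (ev2.and ((ev1.filter_mono nhdsWithin_le_nhds).and (Ioo_mem_nhdsGT hε.1 : ∀ᶠ t in nhdsWithin (0:ℝ) (Ioi 0), t ∈ Ioo 0 ε)))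
  have hτ0 : 0 < τ := hτ
  have hτε : τ < ε := (hτ' ⟨hτ0, le_rfl⟩).2.2.2
  have hTm : ∀ t ∈ Icc 0 τ, t ∈ Ico 0 T := fun t ht =>
    ⟨ht.1, ht.2.trans_lt (hτε.trans hε.2)⟩
  have hsg : ∀ t ∈ Icc 0 τ, ∀ x ∈ Icc x₀ x2, 0 < deriv f x2 * deriv (fun y => ut t y) x := by
    intro t ht x hx
    rcases ht.1.lt_or_eq with h | h
    · exact (hτ' ⟨h, ht.2⟩).2.1 x hx (hTm t ht)
    · rw [← h, hv0]; exact hfs x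
  obtain ⟨xa, -, hxa⟩ := isCompact_Icc.exists_isMinOn (s := Icc x₀ x2)
    ⟨x₀, le_rfl, hx2.le⟩ (f := fun x => 1 / 2 * sigma x ^ 2) (by fun_prop)
  obtain ⟨xb, -, hxb⟩ := isCompact_Icc.exists_isMinOn (s := Icc x₀ x2)
    ⟨x₀, le_rfl, hx2.le⟩ (f := b) hb.continuousOn
  have key : 0 < wx τ x₀ := by
    refine hopf_core (c := s * s / 2) (am := 1 / 2 * sigma xa ^ 2) (B := - b xb) hx2 hτ0
      (by have := hspos xa; positivity) (by linarith)
      (fun x => 1 / 2 * sigma x ^ 2) b (fun x hx => hxa hx)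
      (fun x hx => by rw [neg_neg]; exact hxb hx) w wt wx wxx ?_
      (fun t ht x hx => hwt t (hTm t ht) x) (fun t ht x hx => hwx t (hTm t ht) x)
      (fun t ht x hx => hwxx t (hTm t ht) x) ?_ (fun x _ => hw0 x) ?_ ?_
    · refine (continuousOn_const.mul (uc.sub vc)).mono ?_
      exact fun p hp => ⟨hTm _ hp.1, mem_univ _⟩
    · intro t ht x hx
      simp only [wt, wx, wxx, upde t (hTm t ht) x, vpde t (hTm t ht) x]
      have h1 := mul_nonneg (hsign x hx) (hsg t ht x hx).le
      rw [hs_def]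
      nlinarith
    · intro t ht
      rcases ht.1.lt_or_eq with h | h
      · simp [w, hobs t ⟨h, ht.2.trans_lt hτε⟩]
      · rw [← h]; exact hw0 x₀
    · intro t ht
      rcases ht.1.lt_or_eq with h | h
      · exact (hτ' ⟨h, ht.2⟩).1
      · rw [← h, hw0]; simp
  have : wx τ x₀ = 0 := by simp [wx, hobsd τ ⟨hτ0, hτε⟩]
  linarith

lemma IsClassicalSolution.reflect {T : ℝ} {b σ f : ℝ → ℝ} {u : ℝ → ℝ → ℝ}
    (h : IsClassicalSolution T b σ f u) :
    IsClassicalSolution T (fun x => - b (-x)) (fun x => σ (-x)) (fun x => f (-x))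
      (fun t x => u t (-x)) := by
  obtain ⟨uc, ut1, ux1, uxx1, utc, uxc, uxxc, upde, ui⟩ := h
  have e1 : ∀ t, deriv (fun y => u t (-y)) = fun x => - deriv (fun y => u t y) (-x) := by
    intro t; funext x; exact deriv_comp_neg (fun y => u t y) x
  have e2 : ∀ t, deriv (deriv (fun y => u t (-y))) =
      fun x => deriv (deriv (fun y => u t y)) (-x) := by
    intro t; rw [e1]; funext x
    have : deriv (fun x => - deriv (fun y => u t y) (-x)) x =
      - deriv (fun x => deriv (fun y => u t y) (-x)) x := deriv.fun_neg
    rw [this, deriv_comp_neg, neg_neg]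
  have hm : MapsTo (fun p : ℝ × ℝ => (p.1, -p.2)) (Ico 0 T ×ˢ univ) (Ico 0 T ×ˢ univ) :=
    fun p hp => ⟨hp.1, mem_univ _⟩
  have hmc : ContinuousOn (fun p : ℝ × ℝ => (p.1, -p.2)) (Ico 0 T ×ˢ univ) := by fun_prop
  refine ⟨uc.comp hmc hm, fun t ht x => ut1 t ht (-x), fun t ht x => ?_, fun t ht x => ?_,
    utc.comp hmc hm, ?_, ?_, fun t ht x => ?_, fun x => ui (-x)⟩
  · exact (ux1 t ht (-x)).comp x differentiableAt_id.neg
  · rw [e1]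
    exact ((uxx1 t ht (-x)).comp x differentiableAt_id.neg).neg
  · simp only [e1]
    exact (uxc.comp hmc hm).neg
  · simp only [e2]
    exact uxxc.comp hmc hm
  · rw [e2, e1]
    simp only
    rw [upde t ht (-x)]
    ring

lemma PiecewiseAnalytic.right {ψ : ℝ → ℝ} (h : PiecewiseAnalytic ψ) (x : ℝ) :
    ∃ g, AnalyticAt ℝ g x ∧ ∀ᶠ y in nhdsWithin x (Ioi x), ψ y = g y := by
  obtain ⟨δ, κ, φ, -, hmono, hbot, htop, -, han, heq⟩ := h
  obtain ⟨J, hJ⟩ := (htop.eventually_gt_atTop x).exists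
  obtain ⟨j, hj, hj'⟩ := Int.exists_greatest_of_bdd (P := fun j => κ j ≤ x)
    ⟨J, fun z hz => (hmono.lt_iff_lt.1 (hz.trans_lt hJ)).le⟩ (hbot.eventually_le_atBot x).exists
  have hlt : x < κ (j + 1) := by
    by_contra hc
    have := hj' (j + 1) (not_lt.1 hc)
    omega
  obtain ⟨g, hg, hga⟩ := analyticWithinAt_iff_exists_analyticAt.1 (han j x ⟨hj, hlt.le⟩)
  refine ⟨g, hga, ?_⟩
  rw [eventuallyEq_nhdsWithin_iff] at hg
  filter_upwards [nhdsWithin_le_nhds hg, Ioo_mem_nhdsGT hlt] with y h1 h2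
  have hy : y ∈ Ico (κ j) (κ (j + 1)) := ⟨hj.trans h2.1.le, h2.2⟩
  rw [heq j y hy]
  exact h1 (mem_insert_of_mem _ (Ico_subset_Icc_self hy))

lemma PiecewiseAnalytic.left {ψ : ℝ → ℝ} (h : PiecewiseAnalytic ψ) (x : ℝ) :
    ∃ g, AnalyticAt ℝ g x ∧ ∀ᶠ y in nhdsWithin x (Iio x), ψ y = g y := by
  obtain ⟨δ, κ, φ, -, hmono, hbot, htop, -, han, heq⟩ := h
  obtain ⟨J, hJ⟩ := (htop.eventually_gt_atTop x).exists
  obtain ⟨j, hj, hj'⟩ := Int.exists_greatest_of_bdd (P := fun j => κ j < x)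
    ⟨J, fun z hz => (hmono.lt_iff_lt.1 (hz.trans hJ)).le⟩ (hbot.eventually_lt_atBot x).exists
  have hlt : x ≤ κ (j + 1) := by
    by_contra hc
    have := hj' (j + 1) (not_le.1 hc)
    omega
  obtain ⟨g, hg, hga⟩ := analyticWithinAt_iff_exists_analyticAt.1 (han j x ⟨hj.le, hlt⟩)
  refine ⟨g, hga, ?_⟩
  rw [eventuallyEq_nhdsWithin_iff] at hg
  filter_upwards [nhdsWithin_le_nhds hg, Ioo_mem_nhdsLT hj] with y h1 h2
  have hy : y ∈ Ico (κ j) (κ (j + 1)) := ⟨h2.1.le, h2.2.trans_le hlt⟩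
  rw [heq j y hy]
  exact h1 (mem_insert_of_mem _ (Ico_subset_Icc_self hy))

lemma dichotomy_right {b bt : ℝ → ℝ} (hb : PiecewiseAnalytic b) (hbt : PiecewiseAnalytic bt)
    (x : ℝ) : (∀ᶠ y in nhdsWithin x (Ioi x), b y - bt y = 0) ∨
      (∀ᶠ y in nhdsWithin x (Ioi x), b y - bt y ≠ 0) := by
  obtain ⟨g, hg, hge⟩ := hb.right x
  obtain ⟨g', hg', hge'⟩ := hbt.right x
  rcases (hg.sub hg').eventually_eq_zero_or_eventually_ne_zero with h | h
  · left
    filter_upwards [hge, hge', nhdsWithin_le_nhds h] with y h1 h2 h3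
    rw [h1, h2]; exact h3
  · right
    filter_upwards [hge, hge', nhdsWithin_mono x (fun y (hy : x < y) => hy.ne') h] with y h1 h2 h3
    rw [h1, h2]; exact h3

lemma dichotomy_left {b bt : ℝ → ℝ} (hb : PiecewiseAnalytic b) (hbt : PiecewiseAnalytic bt)
    (x : ℝ) : (∀ᶠ y in nhdsWithin x (Iio x), b y - bt y = 0) ∨
      (∀ᶠ y in nhdsWithin x (Iio x), b y - bt y ≠ 0) := by
  obtain ⟨g, hg, hge⟩ := hb.left x
  obtain ⟨g', hg', hge'⟩ := hbt.left x
  rcases (hg.sub hg').eventually_eq_zero_or_eventually_ne_zero with h | h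
  · left
    filter_upwards [hge, hge', nhdsWithin_le_nhds h] with y h1 h2 h3
    rw [h1, h2]; exact h3
  · right
    filter_upwards [hge, hge', nhdsWithin_mono x (fun y (hy : y < x) => hy.ne) h] with y h1 h2 h3
    rw [h1, h2]; exact h3

/-- Pointwise-observation variant of Theorem 1: the drift is uniquely determined by the
values and first spatial derivatives of the solution at a single point, for small times. -/
theorem drift_uniqueness_pointwise
    (T : ℝ) (hT : 0 < T)
    (sigma b bt : ℝ → ℝ)
    (hsLip : ∃ K, LipschitzWith K sigma) (hspos : ∀ x, 0 < sigma x)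
    (hb : ClassM b) (hbt : ClassM bt)
    (f : ℝ → ℝ) (hf : ContDiff ℝ 2 f) (hfd : ∀ x, deriv f x ≠ 0)
    (u ut : ℝ → ℝ → ℝ)
    (hu : IsClassicalSolution T b sigma f u)
    (hut : IsClassicalSolution T bt sigma f ut)
    (ε : ℝ) (hε : ε ∈ Ioo 0 T) (x₀ : ℝ)
    (hobs : ∀ t ∈ Ioo 0 ε, u t x₀ = ut t x₀)
    (hobsd : ∀ t ∈ Ioo 0 ε,
      deriv (fun y => u t y) x₀ = deriv (fun y => ut t y) x₀) :
    ∀ x : ℝ, b x = bt x := by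
  obtain ⟨Kσ, hσ⟩ := hsLip
  obtain ⟨⟨Kb, hbL⟩, hbP⟩ := hb
  obtain ⟨⟨Kt, htL⟩, htP⟩ := hbt
  have hfc : Continuous (deriv f) := hf.continuous_deriv (by norm_num)
  have hR := right_uniqueness T hT sigma b bt hσ.continuous hspos hbL.continuous htL.continuous
    (dichotomy_right hbP htP) f hfc hfd u ut hu hut ε hε x₀ hobs hobsd
  have ef : deriv (fun x => f (-x)) = fun x => - deriv f (-x) := by
    funext x; exact deriv_comp_neg f x
  have hL := right_uniqueness T hT (fun x => sigma (-x)) (fun x => - b (-x)) (fun x => - bt (-x))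
    (hσ.continuous.comp continuous_neg) (fun x => hspos (-x))
    (hbL.continuous.comp continuous_neg).neg (htL.continuous.comp continuous_neg).neg
    (fun x => by
      have ht : Tendsto (fun y : ℝ => -y) (nhdsWithin x (Ioi x)) (nhdsWithin (-x) (Iio (-x))) :=
        tendsto_neg_nhdsGT
      rcases dichotomy_left hbP htP (-x) with h | h
      · left
        filter_upwards [ht.eventually h] with y hy
        linarith
      · right
        filter_upwards [ht.eventually h] with y hy h0
        exact hy (by linarith))
    (fun x => f (-x)) (by rw [ef]; exact (hfc.comp continuous_neg).neg)
    (fun x => by rw [ef]; exact neg_ne_zero.2 (hfd (-x)))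
    (fun t x => u t (-x)) (fun t x => ut t (-x)) hu.reflect hut.reflect ε hε (-x₀)
    (fun t ht => by simp only [neg_neg]; exact hobs t ht)
    (fun t ht => by
      have e1 := deriv_comp_neg (fun y => u t y) (-x₀)
      have e2 := deriv_comp_neg (fun y => ut t y) (-x₀)
      simp only [neg_neg] at e1 e2
      rw [e1, e2, hobsd t ht])
  have hL' : ∀ x, x < x₀ → b x = bt x := by
    intro x hx
    have := hL (-x) (by linarith)
    simpa using this
  intro x
  rcases lt_trichotomy x x₀ with h | h | h
  · exact hL' x h
  · rw [h]
    have hcl : IsClosed {x | b x = bt x} := isClosed_eq hbL.continuous htL.continuous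
    have := closure_minimal (s := Ioi x₀) (t := {x | b x = bt x}) hR hcl
    rw [closure_Ioi] at this
    exact this (mem_Ici.2 le_rfl)
  · exact hR x h
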